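/- Let σ > 0, 0 < p < 1, and 0 < d2max ≤ d1max. Define f(d2) = 1 − Q(d2/(2σ)) − p·Q((d1max − d2)/(2σ)) and d2* = d1max/2 − (4σ²/d1max)·ln p. Then d2* > 0, and f attains its maximum over the interval (0, d2max] at the point min(d2*, d2max); that is, f(min(d2*, d2max)) ≥ f(d2) for all d2 ∈ (0, d2max]. -/

import Mathlib

/-- The Gaussian tail function `Q(x) = ∫_x^∞ (1/√(2π)) e^{−t²/2} dt`. -/
noncomputable def gaussQ (x : ℝ) : ℝ :=
  ∫ t in Set.Ioi x, (1 / Real.sqrt (2 * Real.pi)) * Real.exp (-t ^ 2 / 2)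

/-!
The density of `gaussQ` is the standard normal density `φ`, so the derivative of the objective at
`d₂` is `(φ (d₂ / (2σ)) - p φ ((d₁ - d₂) / (2σ))) / (2σ)`. After taking logarithms the quadratic
terms in `d₂` cancel, and the sign of the derivative is the sign of the affine function `d₂* - d₂`.
The objective thus increases up to `d₂*` and decreases afterwards.
-/

open MeasureTheory ProbabilityTheory Set
open scoped NNReal Topology

theorem hasDerivAt_integral_Ioi {E : Type*} [NormedAddCommGroup E] [NormedSpace ℝ E]
    [CompleteSpace E] {f : ℝ → E} {a x : ℝ} (hf : IntegrableOn f (Ioi a)) (hax : a < x)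
    (hcont : ContinuousAt f x) :
    HasDerivAt (fun y ↦ ∫ t in Ioi y, f t) (-f x) x := by
  have hint : IntervalIntegrable f volume a x :=
    (intervalIntegrable_iff_integrableOn_Ioc_of_le hax.le).2 (hf.mono_set Ioc_subset_Ioi_self)
  have hmeas : StronglyMeasurableAtFilter f (𝓝 x) :=
    ⟨Ioi a, Ioi_mem_nhds hax, hf.aestronglyMeasurable⟩
  have hsplit : (fun y ↦ ∫ t in Ioi y, f t) =ᶠ[𝓝 x]
      fun y ↦ (∫ t in Ioi a, f t) - ∫ t in a..y, f t := by
    filter_upwards [Ioi_mem_nhds hax] with y hy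
    rw [← intervalIntegral.integral_Ioi_sub_Ioi hf (le_of_lt hy), sub_sub_cancel]
  exact ((intervalIntegral.integral_hasDerivAt_right hint hmeas hcont).const_sub
    (∫ t in Ioi a, f t)).congr_of_eventuallyEq hsplit

theorem continuous_gaussianPDFReal (μ : ℝ) (v : ℝ≥0) : Continuous (gaussianPDFReal μ v) := by
  rw [gaussianPDFReal_def]
  fun_prop

theorem mul_gaussianPDFReal_lt_iff {μ p x y : ℝ} {v : ℝ≥0} (hv : v ≠ 0) (hp : 0 < p) :
    p * gaussianPDFReal μ v y < gaussianPDFReal μ v x ↔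
      Real.log p < ((y - μ) ^ 2 - (x - μ) ^ 2) / (2 * v) := by
  have hnorm : 0 < (√(2 * Real.pi * v))⁻¹ := by positivity
  obtain ⟨r, rfl⟩ : ∃ r, Real.exp r = p := ⟨Real.log p, Real.exp_log hp⟩
  rw [gaussianPDFReal, gaussianPDFReal, mul_left_comm, mul_lt_mul_iff_right₀ hnorm,
    ← Real.exp_add, Real.exp_lt_exp, Real.log_exp, ← lt_sub_iff_add_lt]
  ring_nf

theorem gaussQ_eq_integral_gaussianPDFReal (x : ℝ) :
    gaussQ x = ∫ t in Ioi x, gaussianPDFReal 0 1 t := by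
  simp only [gaussQ, gaussianPDFReal, one_div, sub_zero, NNReal.coe_one, mul_one]

theorem hasDerivAt_gaussQ (x : ℝ) : HasDerivAt gaussQ (-gaussianPDFReal 0 1 x) x := by
  rw [funext gaussQ_eq_integral_gaussianPDFReal]
  exact hasDerivAt_integral_Ioi (integrable_gaussianPDFReal 0 1).integrableOn (sub_one_lt x)
    (continuous_gaussianPDFReal 0 1).continuousAt

/-- The high-SNR correct-decoding probability `f(d₂)`, with sender 1's separation `d₁` fixed, noise
standard deviation `σ`, and probability `p` that the two source bits disagree. -/
noncomputable def correctDecodingProb (σ p d₁ d₂ : ℝ) : ℝ :=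
  1 - gaussQ (d₂ / (2 * σ)) - p * gaussQ ((d₁ - d₂) / (2 * σ))

/-- The unconstrained optimal separation `d₂*` of sender 2, i.e. the critical point of
`correctDecodingProb σ p d₁`. -/
noncomputable def optimalSeparation (σ p d₁ : ℝ) : ℝ :=
  d₁ / 2 - (4 * σ ^ 2 / d₁) * Real.log p

section

variable {σ p d₁ : ℝ}

theorem hasDerivAt_correctDecodingProb (σ p d₁ x : ℝ) :
    HasDerivAt (correctDecodingProb σ p d₁)
      ((gaussianPDFReal 0 1 (x / (2 * σ)) - p * gaussianPDFReal 0 1 ((d₁ - x) / (2 * σ)))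
        / (2 * σ)) x := by
  have hagree := (hasDerivAt_gaussQ (x / (2 * σ))).comp x ((hasDerivAt_id x).div_const (2 * σ))
  have hdisagree := (hasDerivAt_gaussQ ((d₁ - x) / (2 * σ))).comp x
    (((hasDerivAt_id x).const_sub d₁).div_const (2 * σ))
  exact ((hagree.const_sub 1).sub (hdisagree.const_mul p)).congr_deriv (by ring)

theorem lt_optimalSeparation_iff (hσ : σ ≠ 0) (hd₁ : 0 < d₁) {x : ℝ} :
    x < optimalSeparation σ p d₁ ↔ Real.log p < d₁ * (d₁ - 2 * x) / (8 * σ ^ 2) := by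
  have hfactor : optimalSeparation σ p d₁ - x =
      4 * σ ^ 2 / d₁ * (d₁ * (d₁ - 2 * x) / (8 * σ ^ 2) - Real.log p) := by
    unfold optimalSeparation
    field_simp
    ring
  rw [← sub_pos, hfactor, mul_pos_iff_of_pos_left (by positivity), sub_pos]

theorem optimalSeparation_pos_iff (hσ : σ ≠ 0) (hd₁ : 0 < d₁) :
    0 < optimalSeparation σ p d₁ ↔ Real.log p < d₁ ^ 2 / (8 * σ ^ 2) := by
  rw [lt_optimalSeparation_iff hσ hd₁, mul_zero, sub_zero, sq d₁]

theorem deriv_correctDecodingProb_pos_iff (hσ : 0 < σ) (hp : 0 < p) (hd₁ : 0 < d₁) {x : ℝ} :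
    0 < deriv (correctDecodingProb σ p d₁) x ↔ x < optimalSeparation σ p d₁ := by
  have hexponent : (((d₁ - x) / (2 * σ) - 0) ^ 2 - (x / (2 * σ) - 0) ^ 2) / (2 * (1 : ℝ≥0)) =
      d₁ * (d₁ - 2 * x) / (8 * σ ^ 2) := by
    rw [NNReal.coe_one]
    field_simp
    ring
  rw [(hasDerivAt_correctDecodingProb σ p d₁ x).deriv, div_pos_iff_of_pos_right (by positivity),
    sub_pos, mul_gaussianPDFReal_lt_iff one_ne_zero hp, hexponent,
    lt_optimalSeparation_iff hσ.ne' hd₁]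

theorem isMaxOn_correctDecodingProb_Iic (hσ : 0 < σ) (hp : 0 < p) (hd₁ : 0 < d₁) (b : ℝ) :
    IsMaxOn (correctDecodingProb σ p d₁) (Iic b) (min (optimalSeparation σ p d₁) b) := by
  have hdiff : Differentiable ℝ (correctDecodingProb σ p d₁) := fun x ↦
    (hasDerivAt_correctDecodingProb σ p d₁ x).differentiableAt
  refine isMaxOn_Iic_of_deriv hdiff.continuous.continuousAt hdiff.continuous.continuousAt
    hdiff.differentiableOn hdiff.differentiableOn (fun x hx ↦ ?_) (fun x hx ↦ ?_)
  · exact ((deriv_correctDecodingProb_pos_iff hσ hp hd₁).2 (lt_min_iff.1 hx).1).le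
  · have hlt : optimalSeparation σ p d₁ < x :=
      (min_lt_iff.1 hx.1).resolve_right hx.2.not_gt
    exact not_lt.1 fun hpos ↦ hlt.not_gt ((deriv_correctDecodingProb_pos_iff hσ hp hd₁).1 hpos)

theorem stmt_15_general (hσ : 0 < σ) (hp : 0 < p) (hd₁ : 0 < d₁) :
    (0 < optimalSeparation σ p d₁ ↔ Real.log p < d₁ ^ 2 / (8 * σ ^ 2)) ∧
      ∀ b, IsMaxOn (correctDecodingProb σ p d₁) (Iic b) (min (optimalSeparation σ p d₁) b) :=
  ⟨optimalSeparation_pos_iff hσ.ne' hd₁, isMaxOn_correctDecodingProb_Iic hσ hp hd₁⟩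

end

/-- With `f(d2) = 1 − Q(d2/(2σ)) − p·Q((d1max − d2)/(2σ))` and
`d2* = d1max/2 − (4σ²/d1max)·ln p`, we have `d2* > 0` and `f` attains its maximum over
`(0, d2max]` at `min(d2*, d2max)`. -/
theorem stmt_15 (σ p d1max d2max : ℝ) (hσ : 0 < σ) (hp : 0 < p) (hp1 : p < 1)
    (h2 : 0 < d2max) (h12 : d2max ≤ d1max) :
    0 < d1max / 2 - (4 * σ ^ 2 / d1max) * Real.log p ∧
    ∀ d2 ∈ Set.Ioc (0 : ℝ) d2max,
      1 - gaussQ (d2 / (2 * σ)) - p * gaussQ ((d1max - d2) / (2 * σ))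
        ≤ 1 - gaussQ (min (d1max / 2 - (4 * σ ^ 2 / d1max) * Real.log p) d2max / (2 * σ))
          - p * gaussQ ((d1max -
              min (d1max / 2 - (4 * σ ^ 2 / d1max) * Real.log p) d2max) / (2 * σ)) := by
  obtain ⟨hpos, hmax⟩ := stmt_15_general hσ hp (h2.trans_le h12)
  exact ⟨hpos.2 ((Real.log_neg hp hp1).trans_le (by positivity)), fun _ hd2 ↦ hmax d2max hd2.2⟩
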